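/- arXiv:1604.05173 — 5 statements merged into one kernel-verified Lean document; each statement's English description precedes it below -/
import Mathlib

section
/- Let S : O(X) → [0,∞] be an increasing set function (i.e., S(A) ≤ S(B) for all A,B ∈ O(X) with A ⊆ B) satisfying: (i) S(∅) = 0; (ii) S is superadditive, i.e., S(A ∪ B) ≥ S(A) + S(B) for all A,B ∈ O(X) with A ∩ B = ∅; (iii) S is subadditive, i.e., S(A ∪ B) ≤ S(A) + S(B) for all A,B ∈ O(X); (iv) S(A) ≤ ν(A) for all A ∈ O(X). Then there exists a unique finite Borel measure m on X such that m(A) = S(A) for every A ∈ O(X), and this measure m is absolutely continuous with respect to ν. -/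
open MeasureTheory Set
open scoped ENNReal

/-!
Closed inner approximation of `ν` turns the domination `S ≤ ν` into the continuity estimate
`S W ≤ S V + ν (W \ V)` for open `V` and `W`: cover `W` by `V` and `W \ K` with `K ⊆ V` closed and
`ν (V \ K)` small. Since `ν` is finite, this upgrades finite subadditivity of `S` to countable
subadditivity, so the outer measure induced by `S` extends `S`. For an open set `U` and a closed
`K ⊆ U` nearly exhausting `U`, normality separates `K` from `Uᶜ` by disjoint open sets;
superadditivity on these, with the continuity estimate absorbing `U \ K`, gives Carathéodory's
criterion for `U`.
-/

open TopologicalSpace Filter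
open scoped Topology

theorem apply_partialSups_le_sum_range {α M : Type*} [SemilatticeSup α] [AddCommMonoid M]
    [Preorder M] [AddRightMono M] {f : α → M} (hf : ∀ a b, f (a ⊔ b) ≤ f a + f b) (u : ℕ → α)
    (n : ℕ) : f (partialSups u n) ≤ ∑ i ∈ Finset.range (n + 1), f (u i) := by
  induction n with
  | zero => simp
  | succ n ih =>
    rw [partialSups_add_one, Finset.sum_range_succ]
    exact (hf _ _).trans (by gcongr)

theorem tendsto_measure_iUnion_sdiff_atTop {α : Type*} [MeasurableSpace α] {μ : Measure α}
    [IsFiniteMeasure μ] {s : ℕ → Set α} (hs : ∀ n, MeasurableSet (s n)) (hmono : Monotone s) :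
    Tendsto (fun n => μ ((⋃ i, s i) \ s n)) atTop (𝓝 0) := by
  have hinter : ⋂ n, (⋃ i, s i) \ s n = ∅ := by rw [← sdiff_iUnion, sdiff_self]
  rw [← measure_empty (μ := μ), ← hinter]
  exact tendsto_measure_iInter_atTop
    (fun n => ((MeasurableSet.iUnion hs).diff (hs n)).nullMeasurableSet)
    (fun _ _ h => sdiff_subset_sdiff_right (hmono h)) ⟨0, measure_ne_top _ _⟩

theorem measure_le_of_forall_opens_le {X : Type*} [TopologicalSpace X] [MeasurableSpace X]
    {μ ν : Measure X} [ν.OuterRegular] (h : ∀ U : Opens X, μ U ≤ ν U) : μ ≤ ν := by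
  refine Measure.le_iff'.2 fun s => ?_
  rw [s.measure_eq_iInf_isOpen ν]
  exact le_iInf₂ fun U hsU => le_iInf fun hU => (measure_mono hsU).trans (h ⟨U, hU⟩)

theorem measure_ext_of_opens {X : Type*} [TopologicalSpace X] [MeasurableSpace X] [BorelSpace X]
    {μ ν : Measure X} [IsFiniteMeasure μ] (h : ∀ U : Opens X, μ U = ν U) : μ = ν :=
  ext_of_generate_finite {s | IsOpen s} BorelSpace.measurable_eq isPiSystem_isOpen
    (fun U hU => h ⟨U, hU⟩) (h ⊤)

section

variable {X : Type*} [TopologicalSpace X] {S : Opens X → ℝ≥0∞}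

/-- The outer measure assigning to a set `E` the infimum of `S U` over the open sets `U ⊇ E` when
`S` is monotone and countably subadditive; for general `S`, the infimum is over countable open
covers. -/
noncomputable def opensOuterMeasure (S : Opens X → ℝ≥0∞) (hS : S ⊥ = 0) : OuterMeasure X :=
  inducedOuterMeasure (fun U hU => S ⟨U, hU⟩) isOpen_empty hS

theorem opensOuterMeasure_apply (hS : S ⊥ = 0) (hmono : Monotone S)
    (hsub : ∀ U : ℕ → Opens X, S (⨆ i, U i) ≤ ∑' i, S (U i)) (U : Opens X) :
    opensOuterMeasure S hS U = S U :=
  inducedOuterMeasure_eq' (fun _ => isOpen_iUnion)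
    (fun V hV => by simpa only [Opens.iSup_mk] using hsub fun i => ⟨V i, hV i⟩)
    (fun _ _ _ _ h => hmono h) U.isOpen

theorem isCaratheodory_opensOuterMeasure_iff (hS : S ⊥ = 0) (hmono : Monotone S)
    (hsub : ∀ U : ℕ → Opens X, S (⨆ i, U i) ≤ ∑' i, S (U i)) {s : Set X} :
    (opensOuterMeasure S hS).IsCaratheodory s ↔ ∀ W : Opens X,
      opensOuterMeasure S hS (W ∩ s) + opensOuterMeasure S hS (W \ s) ≤
        opensOuterMeasure S hS W := by
  rw [Opens.forall]
  exact inducedOuterMeasure_caratheodory (fun _ => isOpen_iUnion)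
    (fun V hV => by simpa only [Opens.iSup_mk] using hsub fun i => ⟨V i, hV i⟩)
    (fun _ _ _ _ h => hmono h) s

variable [MeasurableSpace X] [OpensMeasurableSpace X] {ν : Measure X} [IsFiniteMeasure ν]
  [ν.WeaklyRegular]

theorem apply_le_add_measure_sdiff (hmono : Monotone S) (hsub : ∀ U V, S (U ⊔ V) ≤ S U + S V)
    (hν : ∀ U : Opens X, S U ≤ ν U) (V W : Opens X) : S W ≤ S V + ν (W \ V) := by
  refine ENNReal.le_of_forall_pos_le_add fun ε hε _ => ?_
  obtain ⟨K, hKV, hK, hVK⟩ := V.isOpen.measurableSet.exists_isClosed_sdiff_lt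
    (measure_ne_top ν V) (ENNReal.coe_ne_zero.2 hε.ne')
  let R : Opens X := ⟨W \ K, W.isOpen.sdiff hK⟩
  have hcover : W ≤ V ⊔ R := fun x hx =>
    (em (x ∈ K)).imp (fun hxK => hKV hxK) fun hxK => ⟨hx, hxK⟩
  have hR : ν R ≤ ν (W \ V) + ε := calc
    ν (W \ K) ≤ ν (W \ V ∪ V \ K) := measure_mono (sdiff_triangle _ _ _)
    _ ≤ ν (W \ V) + ν (V \ K) := measure_union_le _ _
    _ ≤ ν (W \ V) + ε := by gcongr
  calc
    S W ≤ S V + S R := (hmono hcover).trans (hsub V R)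
    _ ≤ S V + (ν (W \ V) + ε) := by grw [hν R, hR]
    _ = S V + ν (W \ V) + ε := (add_assoc _ _ _).symm

theorem apply_iSup_le_iSup_of_le_measure (hmono : Monotone S) (hsub : ∀ U V, S (U ⊔ V) ≤ S U + S V)
    (hν : ∀ U : Opens X, S U ≤ ν U) {U : ℕ → Opens X} (hU : Monotone U) :
    S (⨆ i, U i) ≤ ⨆ i, S (U i) := by
  have hlim : Tendsto (fun n => (⨆ i, S (U i)) + ν (↑(⨆ i, U i) \ U n)) atTop
      (𝓝 (⨆ i, S (U i))) := by
    simpa only [Opens.coe_iSup, add_zero] using (tendsto_measure_iUnion_sdiff_atTop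
      (μ := ν) (fun n => (U n).isOpen.measurableSet) hU).const_add (⨆ i, S (U i))
  refine ge_of_tendsto' hlim fun n => ?_
  grw [apply_le_add_measure_sdiff hmono hsub hν (U n), le_iSup (fun i => S (U i)) n]

theorem apply_iSup_le_tsum_of_le_measure (hmono : Monotone S) (hsub : ∀ U V, S (U ⊔ V) ≤ S U + S V)
    (hν : ∀ U : Opens X, S U ≤ ν U) (U : ℕ → Opens X) : S (⨆ i, U i) ≤ ∑' i, S (U i) := calc
  S (⨆ i, U i) = S (⨆ n, partialSups U n) := by rw [iSup_partialSups_eq]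
  _ ≤ ⨆ n, S (partialSups U n) :=
    apply_iSup_le_iSup_of_le_measure hmono hsub hν (partialSups U).monotone
  _ ≤ ∑' i, S (U i) := iSup_le fun n =>
    (apply_partialSups_le_sum_range hsub U n).trans (ENNReal.sum_le_tsum _)

theorem exists_disjoint_opens_measure_sdiff_lt [NormalSpace X] (U : Opens X) {ε : ℝ≥0∞}
    (hε : ε ≠ 0) :
    ∃ A B : Opens X, Disjoint A B ∧ (U : Set X)ᶜ ⊆ B ∧ ν (U \ A) < ε := by
  obtain ⟨K, hKU, hK, hUK⟩ :=
    U.isOpen.measurableSet.exists_isClosed_sdiff_lt (measure_ne_top ν U) hε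
  obtain ⟨A, B, hA, hB, hKA, hUB, hAB⟩ :=
    normal_separation hK U.isOpen.isClosed_compl (disjoint_compl_right_iff_subset.2 hKU)
  exact ⟨⟨A, hA⟩, ⟨B, hB⟩, Opens.coe_disjoint.1 hAB, hUB,
    (measure_mono (sdiff_subset_sdiff_right hKA)).trans_lt hUK⟩

theorem isCaratheodory_opensOuterMeasure [NormalSpace X] (hS : S ⊥ = 0) (hmono : Monotone S)
    (hsuper : ∀ U V, Disjoint U V → S U + S V ≤ S (U ⊔ V))
    (hsub : ∀ U V, S (U ⊔ V) ≤ S U + S V) (hν : ∀ U : Opens X, S U ≤ ν U) (U : Opens X) :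
    (opensOuterMeasure S hS).IsCaratheodory U := by
  have hσ := apply_iSup_le_tsum_of_le_measure hmono hsub hν
  have happly := opensOuterMeasure_apply hS hmono hσ
  refine (isCaratheodory_opensOuterMeasure_iff hS hmono hσ).2 fun W => ?_
  rw [happly]
  refine ENNReal.le_of_forall_pos_le_add fun ε hε _ => ?_
  obtain ⟨A, B, hAB, hUB, hUA⟩ :=
    exists_disjoint_opens_measure_sdiff_lt (ν := ν) U (ENNReal.coe_ne_zero.2 hε.ne')
  have hinter : opensOuterMeasure S hS (W ∩ U) ≤ S (W ⊓ A) + ε := by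
    have hsdiff : (↑(W ⊓ U) \ ↑(W ⊓ A) : Set X) ⊆ U \ A :=
      fun x hx => ⟨hx.1.2, fun hxA => hx.2 ⟨hx.1.1, hxA⟩⟩
    rw [← Opens.coe_inf, happly]
    grw [apply_le_add_measure_sdiff hmono hsub hν (W ⊓ A), hsdiff, hUA]
  have hdiff : opensOuterMeasure S hS (W \ U) ≤ S (W ⊓ B) := by
    rw [← happly]
    exact measure_mono fun x hx => ⟨hx.1, hUB hx.2⟩
  calc
    opensOuterMeasure S hS (W ∩ U) + opensOuterMeasure S hS (W \ U)
      ≤ S (W ⊓ A) + ε + S (W ⊓ B) := add_le_add hinter hdiff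
    _ = S (W ⊓ A) + S (W ⊓ B) + ε := add_right_comm _ _ _
    _ ≤ S (W ⊓ A ⊔ W ⊓ B) + ε := by
      grw [hsuper _ _ (hAB.mono inf_le_right inf_le_right)]
    _ ≤ S W + ε := by grw [hmono (sup_le inf_le_left inf_le_left)]

end

theorem deGiorgi_letta_general
    {X : Type*} [TopologicalSpace X] [NormalSpace X] [MeasurableSpace X] [BorelSpace X]
    (ν : Measure X) [IsFiniteMeasure ν] [ν.WeaklyRegular]
    (S : Opens X → ℝ≥0∞)
    (hmono : Monotone S)
    (hsuper : ∀ U V, Disjoint U V → S U + S V ≤ S (U ⊔ V))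
    (hsub : ∀ U V, S (U ⊔ V) ≤ S U + S V)
    (hν : ∀ U : Opens X, S U ≤ ν U) :
    ∃ m ≤ ν, (∀ U : Opens X, m U = S U) ∧
      ∀ m' : Measure X, (∀ U : Opens X, m' U = S U) → m' = m := by
  have hS : S ⊥ = 0 := by simpa using hν ⊥
  have hborel : ‹MeasurableSpace X› ≤ (opensOuterMeasure S hS).caratheodory :=
    BorelSpace.measurable_eq.trans_le <| MeasurableSpace.generateFrom_le fun U hU =>
      isCaratheodory_opensOuterMeasure hS hmono hsuper hsub hν ⟨U, hU⟩
  let m := (opensOuterMeasure S hS).toMeasure hborel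
  have hm (U : Opens X) : m U = S U := by
    rw [toMeasure_apply _ _ U.isOpen.measurableSet,
      opensOuterMeasure_apply hS hmono (apply_iSup_le_tsum_of_le_measure hmono hsub hν)]
  have hmν : m ≤ ν := measure_le_of_forall_opens_le fun U => (hm U).trans_le (hν U)
  have : IsFiniteMeasure m := isFiniteMeasure_of_le ν hmν
  exact ⟨m, hmν, hm, fun m' hm' => (measure_ext_of_opens fun U => (hm U).trans (hm' U).symm).symm⟩

/-- **De Giorgi–Letta.** An increasing set function on the open sets of a
metric space which vanishes on `∅`, is superadditive on disjoint open sets, subadditive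
on open sets, and dominated by a finite Borel measure `ν`, extends uniquely to a finite
Borel measure on `X`, and this measure is absolutely continuous with respect to `ν`. -/
theorem deGiorgi_letta
    {X : Type*} [MetricSpace X] [MeasurableSpace X] [BorelSpace X]
    (ν : Measure X) [IsFiniteMeasure ν]
    (S : Set X → ℝ≥0∞)
    (hmono : ∀ A B : Set X, IsOpen A → IsOpen B → A ⊆ B → S A ≤ S B)
    (hempty : S ∅ = 0)
    (hsuper : ∀ A B : Set X, IsOpen A → IsOpen B → A ∩ B = ∅ → S A + S B ≤ S (A ∪ B))
    (hsub : ∀ A B : Set X, IsOpen A → IsOpen B → S (A ∪ B) ≤ S A + S B)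
    (hbound : ∀ A : Set X, IsOpen A → S A ≤ ν A) :
    ∃ m : Measure X, IsFiniteMeasure m ∧ (∀ A : Set X, IsOpen A → m A = S A) ∧
      m ≪ ν ∧
      ∀ m' : Measure X, IsFiniteMeasure m' → (∀ A : Set X, IsOpen A → m' A = S A) →
        m' = m := by
  obtain ⟨m, hmν, hm, huniq⟩ := deGiorgi_letta_general ν (fun U => S U)
    (fun U V h => hmono U V U.isOpen V.isOpen h)
    (fun U V h => hsuper U V U.isOpen V.isOpen (Opens.coe_disjoint.2 h).inter_eq)
    (fun U V => hsub U V U.isOpen V.isOpen) (fun U => hbound U U.isOpen)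
  exact ⟨m, isFiniteMeasure_of_le ν hmν, fun A hA => hm ⟨A, hA⟩, hmν.absolutelyContinuous,
    fun m' _ hm' => huniq m' fun U => hm' U U.isOpen⟩
end

section
/- Assume: L is ru-usc; for every x ∈ X and every t ∈ (0,1), t·cl(𝕃_x) ⊆ int(𝕃_x); and for every x ∈ X, L(x,·) is lower semicontinuous at every point of int(𝕃_x). Then L̂ is ru-usc, i.e., there exists a μ-locally integrable function a' : X → (0,∞] such that limsup_{t→1⁻} Δ^{a'}_{L̂}(t) ≤ 0. -/
open MeasureTheory Filter Topology Set
open scoped ENNReal Pointwise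

/-- The Borel measurable structure on matrices, induced by the product structure. -/
instance matrixMeasurableSpace {m N : ℕ} : MeasurableSpace (Matrix (Fin m) (Fin N) ℝ) :=
  inferInstanceAs (MeasurableSpace (Fin m → Fin N → ℝ))

noncomputable section

variable {X : Type*} {m N : ℕ}

/-- The effective domain `𝕃_x` of `L(x,·)`. -/
def effDom (L : X → Matrix (Fin m) (Fin N) ℝ → ℝ≥0∞) (x : X) :
    Set (Matrix (Fin m) (Fin N) ℝ) :=
  {ξ | L x ξ ≠ ⊤}

/-- The quotient `(L(x,tξ) − L(x,ξ)) / (a(x) + L(x,ξ))` (meaningful for `ξ ∈ 𝕃_x`),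
with the convention that a quotient with denominator `∞` equals `0`. -/
def ruQuot (L : X → Matrix (Fin m) (Fin N) ℝ → ℝ≥0∞) (a : X → ℝ≥0∞) (t : ℝ) (x : X)
    (ξ : Matrix (Fin m) (Fin N) ℝ) : EReal :=
  if a x + L x ξ = ⊤ then 0
  else if L x (t • ξ) = ⊤ then ⊤
  else ((((L x (t • ξ)).toReal - (L x ξ).toReal) / (a x + L x ξ).toReal : ℝ) : EReal)

/-- `Δ^a_L(t) = sup_{x ∈ X} sup_{ξ ∈ 𝕃_x} (L(x,tξ) − L(x,ξ)) / (a(x) + L(x,ξ))`. -/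
def ruDelta (L : X → Matrix (Fin m) (Fin N) ℝ → ℝ≥0∞) (a : X → ℝ≥0∞) (t : ℝ) : EReal :=
  ⨆ (x : X) (ξ : Matrix (Fin m) (Fin N) ℝ) (_ : ξ ∈ effDom L x), ruQuot L a t x ξ

/-- `a : X → (0,∞]` is `μ`-locally integrable. -/
def MuLocallyIntegrable [TopologicalSpace X] [MeasurableSpace X] (μ : Measure X)
    (a : X → ℝ≥0∞) : Prop :=
  ∀ x : X, ∃ U ∈ 𝓝 x, ∫⁻ y in U, a y ∂μ < ⊤

/-- `L` is radially uniformly upper semicontinuous (ru-usc): there is a `μ`-locally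
integrable `a : X → (0,∞]` with `limsup_{t→1⁻} Δ^a_L(t) ≤ 0`. -/
def IsRuUsc [TopologicalSpace X] [MeasurableSpace X] (μ : Measure X)
    (L : X → Matrix (Fin m) (Fin N) ℝ → ℝ≥0∞) : Prop :=
  ∃ a : X → ℝ≥0∞, (∀ x, 0 < a x) ∧ MuLocallyIntegrable μ a ∧
    limsup (fun t => ruDelta L a t) (𝓝[<] (1:ℝ)) ≤ (0 : EReal)

/-- `L̂(x,ξ) = liminf_{t→1⁻} L(x,tξ)`. -/
def hatL (L : X → Matrix (Fin m) (Fin N) ℝ → ℝ≥0∞) (x : X)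
    (ξ : Matrix (Fin m) (Fin N) ℝ) : ℝ≥0∞ :=
  liminf (fun t : ℝ => L x (t • ξ)) (𝓝[<] (1:ℝ))

end

/-!
A bound `Δ^a_L(t) ≤ ε` with `0 ≤ ε` says that `L(x,tξ) ≤ L(x,ξ) + ε (a(x) + L(x,ξ))` for *all* `ξ`
and all `x` with `a(x) < ∞`: outside `𝕃_x` the right-hand side is infinite, and where `a(x) = ∞`
the quotient is `0`. It can therefore be applied at every point `sξ` of a ray, and since the
right-hand side is a monotone continuous function of `L(x,sξ)`, the inequality survives the
`liminf` as `s → 1⁻`. Hence `Δ^a_{L̂}(t) ≤ ε` with the same `a`.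
-/

section RuUsc

open scoped NNReal

variable {X : Type*} {m N : ℕ} {L : X → Matrix (Fin m) (Fin N) ℝ → ℝ≥0∞} {a : X → ℝ≥0∞}
  {t : ℝ} {ε : ℝ≥0} {x : X} {ξ : Matrix (Fin m) (Fin N) ℝ}

theorem ruQuot_le_coe_iff (ha₀ : 0 < a x) (ha : a x ≠ ⊤) (hξ : ξ ∈ effDom L x) :
    ruQuot L a t x ξ ≤ ((ε : ℝ) : EReal) ↔
      L x (t • ξ) ≤ L x ξ + ε * (a x + L x ξ) := by
  have hden : a x + L x ξ ≠ ⊤ := ENNReal.add_ne_top.2 ⟨ha, hξ⟩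
  have hden₀ : 0 < (a x + L x ξ).toReal :=
    ENNReal.toReal_pos (ha₀.trans_le le_self_add).ne' hden
  have hmul : ε * (a x + L x ξ) ≠ ⊤ := ENNReal.mul_ne_top ENNReal.coe_ne_top hden
  have hbound : L x ξ + ε * (a x + L x ξ) ≠ ⊤ := ENNReal.add_ne_top.2 ⟨hξ, hmul⟩
  rw [ruQuot, if_neg hden]
  by_cases htop : L x (t • ξ) = ⊤
  · simp only [htop, if_true, top_le_iff, EReal.coe_ne_top, hbound]
  · rw [if_neg htop, EReal.coe_le_coe_iff, div_le_iff₀ hden₀, sub_le_iff_le_add',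
      ← ENNReal.toReal_le_toReal htop hbound, ENNReal.toReal_add hξ hmul, ENNReal.toReal_mul,
      ENNReal.coe_toReal]

theorem ruDelta_le_coe_iff (ha₀ : ∀ x, 0 < a x) :
    ruDelta L a t ≤ ((ε : ℝ) : EReal) ↔
      ∀ x, a x ≠ ⊤ → ∀ ξ, L x (t • ξ) ≤ L x ξ + ε * (a x + L x ξ) := by
  simp only [ruDelta, iSup_le_iff]
  refine forall_congr' fun x => ⟨fun h ha ξ => ?_, fun h ξ hξ => ?_⟩
  · by_cases hξ : ξ ∈ effDom L x
    · exact (ruQuot_le_coe_iff (ha₀ x) ha hξ).1 (h ξ hξ)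
    · have htop : L x ξ = ⊤ := not_not.1 hξ
      simp only [htop, top_add, le_top]
  · by_cases ha : a x = ⊤
    · rw [ruQuot, if_pos (by rw [ha, top_add])]
      exact_mod_cast ε.coe_nonneg
    · exact (ruQuot_le_coe_iff (ha₀ x) ha hξ).2 (h ha ξ)

theorem hatL_smul_le_of_monotone {φ : ℝ≥0∞ → ℝ≥0∞} (hφ : Monotone φ) (hφc : Continuous φ)
    (h : ∀ ζ, L x (t • ζ) ≤ φ (L x ζ)) (ξ : Matrix (Fin m) (Fin N) ℝ) :
    hatL L x (t • ξ) ≤ φ (hatL L x ξ) :=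
  calc
    hatL L x (t • ξ) = liminf (fun s : ℝ => L x (t • s • ξ)) (𝓝[<] 1) := by
      simp only [hatL, smul_comm t]
    _ ≤ liminf (fun s : ℝ => φ (L x (s • ξ))) (𝓝[<] 1) :=
      liminf_le_liminf (Eventually.of_forall fun s => h (s • ξ))
    _ = φ (hatL L x ξ) :=
      (hφ.map_liminf_of_continuousAt (fun s : ℝ => L x (s • ξ)) hφc.continuousAt).symm

theorem ruDelta_hatL_le_coe (ha₀ : ∀ x, 0 < a x) (h : ruDelta L a t ≤ ((ε : ℝ) : EReal)) :
    ruDelta (hatL L) a t ≤ ((ε : ℝ) : EReal) := by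
  rw [ruDelta_le_coe_iff ha₀] at h ⊢
  intro x ha
  have hmono : Monotone fun y : ℝ≥0∞ => y + ε * (a x + y) := fun y z hyz => by
    dsimp only
    gcongr
  have hcont : Continuous fun y : ℝ≥0∞ => y + ε * (a x + y) :=
    continuous_id.add
      ((ENNReal.continuous_const_mul ENNReal.coe_ne_top).comp (continuous_const.add continuous_id))
  exact hatL_smul_le_of_monotone hmono hcont (h x ha)

theorem ruUsc_hat_general [TopologicalSpace X] [MeasurableSpace X] {μ : Measure X}
    (hru : IsRuUsc μ L) : IsRuUsc μ (hatL L) := by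
  obtain ⟨a, ha₀, hint, hlim⟩ := hru
  refine ⟨a, ha₀, hint, EReal.le_of_forall_lt_iff_le.1 fun ε hε => ?_⟩
  lift ε to ℝ≥0 using (EReal.coe_pos.1 hε).le
  have hev : ∀ᶠ t in 𝓝[<] (1 : ℝ), ruDelta L a t < ((ε : ℝ) : EReal) :=
    eventually_lt_of_limsup_lt (hlim.trans_lt hε)
  exact limsup_le_of_le (h := hev.mono fun t ht => ruDelta_hatL_le_coe ha₀ ht.le)

end RuUsc

/-- If `L` is ru-usc, `t·cl(𝕃_x) ⊆ int(𝕃_x)` for every `x` and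
`t ∈ (0,1)`, and `L(x,·)` is lsc at every point of `int(𝕃_x)`, then `L̂` is ru-usc. -/
theorem ruUsc_hat
    {X : Type*} {m N : ℕ} [MetricSpace X] [MeasurableSpace X] [BorelSpace X]
    (μ : Measure X) [IsLocallyFiniteMeasure μ]
    (hm : 1 ≤ m) (hN : 1 ≤ N)
    (L : X → Matrix (Fin m) (Fin N) ℝ → ℝ≥0∞)
    (hmeas : Measurable fun p : X × Matrix (Fin m) (Fin N) ℝ => L p.1 p.2)
    (hru : IsRuUsc μ L)
    (hdom : ∀ x : X, ∀ t ∈ Set.Ioo (0:ℝ) 1,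
        t • closure (effDom L x) ⊆ interior (effDom L x))
    (hlsc : ∀ x : X, ∀ ξ ∈ interior (effDom L x), LowerSemicontinuousAt (L x) ξ) :
    ∃ a' : X → ℝ≥0∞, (∀ x, 0 < a' x) ∧ MuLocallyIntegrable μ a' ∧
      limsup (fun t => ruDelta (hatL L) a' t) (𝓝[<] (1:ℝ)) ≤ (0 : EReal) :=
  ruUsc_hat_general hru
end

section
/- Let θ : O(X) → ℝ be a set function such that there exists a finite Borel measure ν̂ on X, absolutely continuous with respect to μ, with |θ(A)| ≤ ν̂(A) for all A ∈ O(X). If d⁻_μθ(x) ≥ 0 for every x ∈ X, then the lower Vitali envelope satisfies θ*(A) ≥ 0 for every A ∈ O(X). -/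
open MeasureTheory Filter Topology Set
open scoped ENNReal

variable {X : Type*}

/-- The "sphere" `∂Q` of the ball of center `x` and radius `ρ`:
the closed ball minus the open ball. -/
def ballFrontier [MetricSpace X] (x : X) (ρ : ℝ) : Set X :=
  Metric.closedBall x ρ \ Metric.ball x ρ

/-- `X` satisfies the Vitali covering theorem with respect to `μ`: a family of
closed balls (encoded by center-radius pairs) which is fine at each point of `A`
admits a countable disjoint subfamily covering `μ`-almost all of `A`. -/
def VitaliCoveringProperty [MetricSpace X] [MeasurableSpace X] (μ : Measure X) : Prop :=
  ∀ (A : Set X) (F : Set (X × ℝ)), (∀ p ∈ F, 0 < p.2) →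
    (∀ x ∈ A, ∀ ε > 0, ∃ r : ℝ, 0 < r ∧ r < ε ∧ (x, r) ∈ F) →
    ∃ G ⊆ F, G.Countable ∧
      G.PairwiseDisjoint (fun p => Metric.closedBall p.1 p.2) ∧
      μ (A \ ⋃ p ∈ G, Metric.closedBall p.1 p.2) = 0

/-- Membership in the class `V_ε(A)`: a countable family (encoded by center-radius
pairs) of pairwise disjoint open balls of `A`, centered in `A`, with radii in `(0,ε)`,
`μ`-negligible spheres, covering `μ`-almost all of `A`. -/
def IsVitaliPack [MetricSpace X] [MeasurableSpace X] (μ : Measure X) (ε : ℝ) (A : Set X)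
    (P : Set (X × ℝ)) : Prop :=
  P.Countable ∧
  (∀ p ∈ P, p.1 ∈ A ∧ 0 < p.2 ∧ p.2 < ε ∧ Metric.ball p.1 p.2 ⊆ A ∧
      μ (ballFrontier p.1 p.2) = 0) ∧
  P.PairwiseDisjoint (fun p => Metric.ball p.1 p.2) ∧
  μ (A \ ⋃ p ∈ P, Metric.ball p.1 p.2) = 0

/-- The extended-real valued sum `Σ_{i∈I} Θ(Q_i)` over a countable family of balls,
defined as the difference of the sums of the positive and negative parts. -/
noncomputable def packSum [MetricSpace X] (Θ : Set X → ℝ) (P : Set (X × ℝ)) : EReal :=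
  ((∑' p : P, ENNReal.ofReal (Θ (Metric.ball (p : X × ℝ).1 (p : X × ℝ).2)) : ℝ≥0∞) : EReal)
    - ((∑' p : P, ENNReal.ofReal (-Θ (Metric.ball (p : X × ℝ).1 (p : X × ℝ).2)) : ℝ≥0∞) : EReal)

/-- The lower Vitali envelope `Θ*(A) = lim_{ε→0} inf { Σ_i Θ(Q_i) : {Q_i} ∈ V_ε(A) }`,
realized as the supremum over `ε > 0` of the infima (inf over the empty class is `+∞`). -/
noncomputable def lowerVitaliEnvelope [MetricSpace X] [MeasurableSpace X]
    (μ : Measure X) (Θ : Set X → ℝ) (A : Set X) : EReal :=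
  ⨆ (ε : ℝ) (_ : 0 < ε), sInf (packSum Θ '' {P | IsVitaliPack μ ε A P})

/-- The upper Vitali envelope `Θ̄*(A) = lim_{ε→0} sup { Σ_i Θ(Q_i) : {Q_i} ∈ V_ε(A) }`,
realized as the infimum over `ε > 0` of the suprema (sup over the empty class is `-∞`). -/
noncomputable def upperVitaliEnvelope [MetricSpace X] [MeasurableSpace X]
    (μ : Measure X) (Θ : Set X → ℝ) (A : Set X) : EReal :=
  ⨅ (ε : ℝ) (_ : 0 < ε), sSup (packSum Θ '' {P | IsVitaliPack μ ε A P})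

/-- The lower derivative `d⁻_μΘ(x) = lim_{ρ→0} inf { Θ(Q)/μ(Q) : Q ∈ Ba(X,x,ρ) }`,
realized as the supremum over `ρ > 0` of the infima over open balls containing `x`,
with radius in `(0,ρ)` and `μ`-negligible sphere. -/
noncomputable def lowerDeriv [MetricSpace X] [MeasurableSpace X]
    (μ : Measure X) (Θ : Set X → ℝ) (x : X) : EReal :=
  ⨆ (ρ : ℝ) (_ : 0 < ρ), sInf {v : EReal | ∃ (y : X) (r : ℝ), 0 < r ∧ r < ρ ∧
      x ∈ Metric.ball y r ∧ μ (ballFrontier y r) = 0 ∧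
      v = ((Θ (Metric.ball y r) / (μ (Metric.ball y r)).toReal : ℝ) : EReal)}

/-- The upper derivative `d⁺_μΘ(x) = lim_{ρ→0} sup { Θ(Q)/μ(Q) : Q ∈ Ba(X,x,ρ) }`. -/
noncomputable def upperDeriv [MetricSpace X] [MeasurableSpace X]
    (μ : Measure X) (Θ : Set X → ℝ) (x : X) : EReal :=
  ⨅ (ρ : ℝ) (_ : 0 < ρ), sSup {v : EReal | ∃ (y : X) (r : ℝ), 0 < r ∧ r < ρ ∧
      x ∈ Metric.ball y r ∧ μ (ballFrontier y r) = 0 ∧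
      v = ((Θ (Metric.ball y r) / (μ (Metric.ball y r)).toReal : ℝ) : EReal)}

/-!
Fix `η > 0`. Since `d⁻_μθ ≥ 0`, every `x` has a scale `ρ` below which all balls `Q ∋ x` satisfy
`θ⁻(Q) ≤ η μ(Q)`, and continuity of `ν` from below makes one scale `ρ` serve for all `x` in a set
`E` such that every measurable set disjoint from `E` has small `ν`-measure. In a pack of balls of
radius less than `ρ`, those meeting `E` contribute at most `η μ(A)` to `∑ θ⁻(Q_i)`; the others have
a union disjoint from `E`, so that `θ⁻ ≤ ν` makes their contribution small too.
-/

theorem exists_forall_disjoint_measure_lt {α : Type*} [MeasurableSpace α] {ν : Measure α}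
    [IsFiniteMeasure ν] {s : ℕ → Set α} (hs : Monotone s) (hcover : ∀ᵐ x ∂ν, ∃ n, x ∈ s n)
    {ε : ℝ≥0∞} (hε : ε ≠ 0) :
    ∃ n, ∀ t, MeasurableSet t → Disjoint (s n) t → ν t < ε := by
  have hlim : Tendsto (fun n => ν (s n) + ε) atTop (𝓝 (ν univ + ε)) := by
    have hunion : ν (⋃ n, s n) = ν univ :=
      measure_congr (eventuallyEq_univ.2 (hcover.mono fun _ => mem_iUnion.2))
    exact hunion ▸ (tendsto_measure_iUnion_atTop (μ := ν) hs).add_const ε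
  obtain ⟨n, hn⟩ : ∃ n, ν univ < ν (s n) + ε :=
    (hlim.eventually_const_lt (ENNReal.lt_add_right (measure_ne_top ν univ) hε)).exists
  refine ⟨n, fun t ht hdisj => lt_of_add_lt_add_left (a := ν (s n)) ?_⟩
  calc ν (s n) + ν t = ν (s n ∪ t) := (measure_union hdisj ht).symm
    _ ≤ ν univ := measure_mono (subset_univ _)
    _ < ν (s n) + ε := hn

theorem tsum_le_mul_measure_iUnion_add_measure_biUnion {α ι : Type*} [Countable ι]
    [MeasurableSpace α] {μ ν : Measure α} {B : ι → Set α} (hB : ∀ i, MeasurableSet (B i))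
    (hdisj : Pairwise (Function.onFun Disjoint B)) {f : ι → ℝ≥0∞} {c : ℝ≥0∞} {bad : Set ι}
    (hbad : ∀ i ∈ bad, f i ≤ ν (B i)) (hgood : ∀ i ∉ bad, f i ≤ c * μ (B i)) :
    ∑' i, f i ≤ c * μ (⋃ i, B i) + ν (⋃ i ∈ bad, B i) := by
  calc ∑' i, f i = ∑' i : ↥badᶜ, f i + ∑' i : bad, f i := by
        rw [add_comm]
        exact (ENNReal.summable.tsum_add_tsum_compl ENNReal.summable).symm
    _ ≤ ∑' i : ↥badᶜ, c * μ (B i) + ∑' i : bad, ν (B i) :=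
        add_le_add (ENNReal.tsum_le_tsum fun i => hgood i i.2)
          (ENNReal.tsum_le_tsum fun i => hbad i i.2)
    _ ≤ ∑' i, c * μ (B i) + ∑' i : bad, ν (B i) := by
        gcongr
        exact ENNReal.tsum_comp_le_tsum_of_injective Subtype.val_injective fun i => c * μ (B i)
    _ = c * μ (⋃ i, B i) + ν (⋃ i ∈ bad, B i) := by
        rw [ENNReal.tsum_mul_left, measure_iUnion hdisj hB,
          measure_biUnion bad.to_countable (fun i _ j _ hij => hdisj hij) fun i _ => hB i]

section MetricSpace

open scoped NNReal

variable [MetricSpace X] {θ : Set X → ℝ}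

theorem neg_le_packSum {P : Set (X × ℝ)} {δ : ℝ≥0∞}
    (h : ∑' p : P, ENNReal.ofReal (-θ (Metric.ball p.1.1 p.1.2)) ≤ δ) :
    -(δ : EReal) ≤ packSum θ P := by
  rw [← zero_sub]
  exact EReal.sub_le_sub (EReal.coe_ennreal_nonneg _) (EReal.coe_ennreal_le_coe_ennreal_iff.2 h)

variable [MeasurableSpace X] {μ ν : Measure X}

theorem le_lowerVitaliEnvelope {A : Set X} {a : EReal} {ε : ℝ} (hε : 0 < ε)
    (h : ∀ P, IsVitaliPack μ ε A P → a ≤ packSum θ P) : a ≤ lowerVitaliEnvelope μ θ A :=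
  le_iSup₂_of_le ε hε (le_sInf (forall_mem_image.2 h))

/-- The set of points `x` such that the negative part of `θ` is at most `η * μ` on every open ball
of radius less than `ρ` that contains `x` and has a `μ`-null sphere. It quantifies the bound
`-η ≤ d⁻_μθ(x)`; values are in `ℝ≥0∞` so that no quotient by `μ` is involved. -/
def negPartLeSet (μ : Measure X) (θ : Set X → ℝ) (η : ℝ≥0∞) (ρ : ℝ) : Set X :=
  {x | ∀ (y : X) (r : ℝ), 0 < r → r < ρ → x ∈ Metric.ball y r → μ (ballFrontier y r) = 0 →
    ENNReal.ofReal (-θ (Metric.ball y r)) ≤ η * μ (Metric.ball y r)}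

theorem antitone_negPartLeSet (η : ℝ≥0∞) : Antitone (negPartLeSet μ θ η) :=
  fun _ _ hle _ hx y r hr hrρ => hx y r hr (hrρ.trans_le hle)

theorem exists_mem_negPartLeSet_of_lowerDeriv_nonneg
    (hpos : ∀ (y : X) (r : ℝ), 0 < r → 0 < μ (Metric.ball y r)) {x : X}
    (hd : 0 ≤ lowerDeriv μ θ x) {η : ℝ≥0} (hη : 0 < η) :
    ∃ ρ > 0, x ∈ negPartLeSet μ θ η ρ := by
  have hlt : ((-η : ℝ) : EReal) < lowerDeriv μ θ x :=
    lt_of_lt_of_le (by exact_mod_cast neg_lt_zero.2 hη) hd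
  simp only [lowerDeriv, lt_iSup_iff] at hlt
  obtain ⟨ρ, hρ, hinf⟩ := hlt
  refine ⟨ρ, hρ, fun y r hr hrρ hx hfrontier => ?_⟩
  obtain htop | hfin := eq_or_ne (μ (Metric.ball y r)) ∞
  · simp [htop, hη.ne']
  have hquot : -(η : ℝ) ≤ θ (Metric.ball y r) / (μ (Metric.ball y r)).toReal := by
    exact_mod_cast hinf.le.trans (sInf_le ⟨y, r, hr, hrρ, hx, hfrontier, rfl⟩)
  rw [le_div_iff₀ (ENNReal.toReal_pos (hpos y r hr).ne' hfin)] at hquot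
  refine ENNReal.ofReal_le_of_le_toReal ?_
  rw [ENNReal.toReal_mul, ENNReal.coe_toReal]
  linarith

theorem exists_forall_disjoint_negPartLeSet_measure_lt [IsFiniteMeasure ν]
    (hpos : ∀ (y : X) (r : ℝ), 0 < r → 0 < μ (Metric.ball y r))
    (hd : ∀ᵐ x ∂ν, 0 ≤ lowerDeriv μ θ x) {η : ℝ≥0} (hη : 0 < η) {ε : ℝ≥0∞} (hε : ε ≠ 0) :
    ∃ ρ > 0, ∀ t, MeasurableSet t → Disjoint (negPartLeSet μ θ η ρ) t → ν t < ε := by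
  have hmono : Monotone fun n : ℕ => negPartLeSet μ θ η (1 / ((n : ℝ) + 1)) :=
    fun _ _ hmn => antitone_negPartLeSet η (Nat.one_div_le_one_div hmn)
  have hcover : ∀ᵐ x ∂ν, ∃ n : ℕ, x ∈ negPartLeSet μ θ η (1 / ((n : ℝ) + 1)) := by
    filter_upwards [hd] with x hx
    obtain ⟨ρ, hρ, hxρ⟩ := exists_mem_negPartLeSet_of_lowerDeriv_nonneg hpos hx hη
    obtain ⟨n, hn⟩ := exists_nat_one_div_lt hρ
    exact ⟨n, antitone_negPartLeSet η hn.le hxρ⟩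
  obtain ⟨n, hn⟩ := exists_forall_disjoint_measure_lt hmono hcover hε
  exact ⟨_, Nat.one_div_pos_of_nat, hn⟩

variable [OpensMeasurableSpace X]

theorem IsVitaliPack.tsum_ofReal_neg_le {A : Set X} {P : Set (X × ℝ)} {ρ : ℝ} {η ε : ℝ≥0∞}
    (hP : IsVitaliPack μ ρ A P)
    (hθ : ∀ (y : X) (r : ℝ), 0 < r →
      ENNReal.ofReal (-θ (Metric.ball y r)) ≤ ν (Metric.ball y r))
    (hν : ∀ t, MeasurableSet t → Disjoint (negPartLeSet μ θ η ρ) t → ν t ≤ ε) :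
    ∑' p : P, ENNReal.ofReal (-θ (Metric.ball p.1.1 p.1.2)) ≤ η * μ A + ε := by
  obtain ⟨hcount, hball, hdisj, -⟩ := hP
  have := hcount.to_subtype
  let B (p : P) : Set X := Metric.ball p.1.1 p.1.2
  have hB (p : P) : MeasurableSet (B p) := Metric.isOpen_ball.measurableSet
  have hBdisj : Pairwise (Function.onFun Disjoint B) :=
    fun p q hpq => hdisj p.2 q.2 (Subtype.coe_injective.ne hpq)
  let bad : Set P := {p | Disjoint (negPartLeSet μ θ η ρ) (B p)}
  have hbad : ∀ p ∈ bad, ENNReal.ofReal (-θ (B p)) ≤ ν (B p) :=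
    fun p _ => hθ _ _ (hball p.1 p.2).2.1
  have hgood : ∀ p ∉ bad, ENNReal.ofReal (-θ (B p)) ≤ η * μ (B p) := by
    intro p hp
    obtain ⟨x, hx, hxB⟩ := not_disjoint_iff.1 hp
    obtain ⟨-, hr, hrρ, -, hfrontier⟩ := hball p.1 p.2
    exact hx _ _ hr hrρ hxB hfrontier
  calc ∑' p, ENNReal.ofReal (-θ (B p))
      ≤ η * μ (⋃ p, B p) + ν (⋃ p ∈ bad, B p) :=
        tsum_le_mul_measure_iUnion_add_measure_biUnion hB hBdisj hbad hgood
    _ ≤ η * μ A + ε := by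
        gcongr
        · exact iUnion_subset fun p => (hball p.1 p.2).2.2.2.1
        · exact hν _ (.biUnion bad.to_countable fun p _ => hB p)
            (disjoint_iUnion₂_right.2 fun _ hp => hp)

theorem lowerVitaliEnvelope_nonneg_of_lowerDeriv_nonneg_general [IsFiniteMeasure ν]
    (hpos : ∀ (x : X) (ρ : ℝ), 0 < ρ → 0 < μ (Metric.ball x ρ))
    (hθ : ∀ (x : X) (ρ : ℝ), 0 < ρ →
      ENNReal.ofReal (-θ (Metric.ball x ρ)) ≤ ν (Metric.ball x ρ))
    (hd : ∀ᵐ x ∂ν, 0 ≤ lowerDeriv μ θ x) {A : Set X} (hA : μ A ≠ ∞) :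
    0 ≤ lowerVitaliEnvelope μ θ A := by
  refine EReal.ge_of_forall_gt_iff_ge.1 fun z hz => ?_
  obtain ⟨δ, rfl⟩ : ∃ δ : ℝ, z = -δ := ⟨-z, (neg_neg z).symm⟩
  have hδ : 0 < δ := neg_lt_zero.1 (EReal.coe_neg'.1 hz)
  have hδ2 : ENNReal.ofReal δ / 2 ≠ 0 := by simpa using hδ
  obtain ⟨η, hη, hηA⟩ := ENNReal.exists_nnreal_pos_mul_lt hA hδ2
  obtain ⟨ρ, hρ, hν⟩ := exists_forall_disjoint_negPartLeSet_measure_lt hpos hd hη hδ2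
  have hneg : ((-δ : ℝ) : EReal) = -((ENNReal.ofReal δ : ℝ≥0∞) : EReal) := by
    rw [EReal.coe_ennreal_ofReal, max_eq_left hδ.le, EReal.coe_neg]
  rw [hneg]
  refine le_lowerVitaliEnvelope hρ fun P hP => neg_le_packSum ?_
  calc ∑' p : P, ENNReal.ofReal (-θ (Metric.ball p.1.1 p.1.2))
      ≤ η * μ A + ENNReal.ofReal δ / 2 :=
        hP.tsum_ofReal_neg_le hθ fun t ht hdisj => (hν t ht hdisj).le
    _ ≤ ENNReal.ofReal δ / 2 + ENNReal.ofReal δ / 2 := by gcongr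
    _ = ENNReal.ofReal δ := ENNReal.add_halves _

end MetricSpace

/-- If `|θ| ≤ ν̂` on open sets for some finite measure `ν̂ ≪ μ` and
`θ` has nonnegative lower derivative everywhere, then its lower Vitali envelope is
nonnegative on every open set. -/
theorem lowerVitaliEnvelope_nonneg_of_lowerDeriv_nonneg
    [MetricSpace X] [MeasurableSpace X] [BorelSpace X]
    (μ : Measure X) [IsFiniteMeasure μ]
    (hpos : ∀ (x : X) (ρ : ℝ), 0 < ρ → 0 < μ (Metric.ball x ρ))
    (θ : Set X → ℝ)
    (ha : ∃ νh : Measure X, IsFiniteMeasure νh ∧ νh ≪ μ ∧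
        ∀ A : Set X, IsOpen A → |θ A| ≤ (νh A).toReal)
    (hd : ∀ x : X, 0 ≤ lowerDeriv μ θ x) :
    ∀ A : Set X, IsOpen A → 0 ≤ lowerVitaliEnvelope μ θ A := by
  obtain ⟨ν, _, -, hν⟩ := ha
  exact fun A _ => lowerVitaliEnvelope_nonneg_of_lowerDeriv_nonneg_general hpos
    (fun x ρ _ => ENNReal.ofReal_le_of_le_toReal ((neg_le_abs _).trans (hν _ Metric.isOpen_ball)))
    (ae_of_all ν hd) (measure_ne_top μ A)
end

section
/- Suppose the set function Θ : O(X) → ℝ satisfies hypotheses (a) and (b). Then for every open ball Q of X with μ(∂Q) = 0, Θ(Q) ≤ Θ*(Q). -/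
open MeasureTheory Filter Topology Set
open scoped ENNReal

variable {X : Type*}

/-!
Let `Q i` be the balls of a Vitali family in `A`. For a finite set `F` of indices, subadditivity
and the bound `Θ ≤ ν` give `Θ A ≤ ∑ i ∈ F, Θ (Q i) + ∑ i ∉ F, ν (Q i)`. The `Q i` are disjoint and
`ν` is finite, so the last sum is the tail of a convergent series; let `F` exhaust the index set.
The resulting bound `Θ A ≤ ∑ i, Θ (Q i)` passes to the infimum over `V_ε(A)`, for each `ε`.
-/

open scoped Function

/-- Hypothesis (b) of the paper: `Θ A ≤ Θ B + Θ C` whenever the open set `A` is the disjoint union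
of its open subsets `B` and `C` up to a `μ`-null set. Only the values of `Θ` on open sets matter. -/
def OpenSubadditive [TopologicalSpace X] [MeasurableSpace X] (μ : Measure X) (Θ : Set X → ℝ) :
    Prop :=
  ∀ A B C : Set X, IsOpen A → IsOpen B → IsOpen C → B ⊆ A → C ⊆ A →
    B ∩ C = ∅ → μ (A \ (B ∪ C)) = 0 → Θ A ≤ Θ B + Θ C

section OpenFamilies

variable {ι : Type*} {Q : ι → Set X}

lemma disjoint_biUnion_iUnion_compl (hd : Pairwise (Disjoint on Q)) (F : Finset ι) :
    Disjoint (⋃ i ∈ F, Q i) (⋃ i : {i // i ∉ F}, Q i) := by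
  simp only [disjoint_iUnion_left, disjoint_iUnion_right]
  exact fun j i hi => hd (ne_of_mem_of_not_mem hi j.2)

lemma biUnion_union_iUnion_compl (Q : ι → Set X) (F : Finset ι) :
    (⋃ i ∈ F, Q i) ∪ ⋃ i : {i // i ∉ F}, Q i = ⋃ i, Q i := by
  rw [iUnion_subtype, ← iUnion_union_distrib]
  exact iUnion_congr fun i => by by_cases hi : i ∈ F <;> simp [hi]

lemma tsum_measure_ne_top_of_pairwise_disjoint [MeasurableSpace X] (ν : Measure X)
    [IsFiniteMeasure ν] (hQ : ∀ i, MeasurableSet (Q i)) (hd : Pairwise (Disjoint on Q)) :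
    ∑' i, ν (Q i) ≠ ∞ :=
  ((tsum_meas_le_meas_iUnion_of_disjoint ν hQ hd).trans_lt (measure_lt_top ν _)).ne

lemma tendsto_measureReal_iUnion_compl_atTop_zero [MeasurableSpace X] {ν : Measure X}
    [IsFiniteMeasure ν] [Countable ι] (hQ : ∀ i, MeasurableSet (Q i))
    (hd : Pairwise (Disjoint on Q)) :
    Tendsto (fun F : Finset ι => ν.real (⋃ i : {i // i ∉ F}, Q i)) atTop (𝓝 0) := by
  have hmeas : Tendsto (fun F : Finset ι => ν (⋃ i : {i // i ∉ F}, Q i)) atTop (𝓝 0) :=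
    tendsto_of_tendsto_of_tendsto_of_le_of_le tendsto_const_nhds
      (ENNReal.tendsto_tsum_compl_atTop_zero (tsum_measure_ne_top_of_pairwise_disjoint ν hQ hd))
      (fun _ => zero_le) (fun _ => measure_iUnion_le _)
  exact (ENNReal.tendsto_toReal ENNReal.zero_ne_top).comp hmeas

lemma summable_of_abs_le_measureReal [MeasurableSpace X] {ν : Measure X} [IsFiniteMeasure ν]
    {f : ι → ℝ} (hQ : ∀ i, MeasurableSet (Q i)) (hd : Pairwise (Disjoint on Q))
    (hf : ∀ i, |f i| ≤ ν.real (Q i)) : Summable f :=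
  .of_norm_bounded
    (ENNReal.summable_toReal (tsum_measure_ne_top_of_pairwise_disjoint ν hQ hd)) hf

namespace OpenSubadditive

variable [TopologicalSpace X] [MeasurableSpace X] {μ ν : Measure X} {Θ : Set X → ℝ} {A : Set X}

lemma biUnion_le_sum (hΘ : OpenSubadditive μ Θ) (h₀ : Θ ∅ ≤ 0) (hQ : ∀ i, IsOpen (Q i))
    (hd : Pairwise (Disjoint on Q)) (F : Finset ι) :
    Θ (⋃ i ∈ F, Q i) ≤ ∑ i ∈ F, Θ (Q i) := by
  classical
  induction F using Finset.induction_on with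
  | empty => simpa using h₀
  | insert a F ha ih =>
    have hopen : IsOpen (⋃ i ∈ F, Q i) := isOpen_biUnion fun i _ => hQ i
    have hdisj : Disjoint (Q a) (⋃ i ∈ F, Q i) :=
      disjoint_iUnion₂_right.2 fun i hi => hd (ne_of_mem_of_not_mem hi ha).symm
    rw [Finset.set_biUnion_insert, Finset.sum_insert ha]
    calc Θ (Q a ∪ ⋃ i ∈ F, Q i) ≤ Θ (Q a) + Θ (⋃ i ∈ F, Q i) :=
          hΘ _ _ _ ((hQ a).union hopen) (hQ a) hopen subset_union_left subset_union_right
            hdisj.inter_eq (by simp)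
      _ ≤ Θ (Q a) + ∑ i ∈ F, Θ (Q i) := by gcongr

lemma le_sum_add_iUnion_compl (hΘ : OpenSubadditive μ Θ) (h₀ : Θ ∅ ≤ 0) (hA : IsOpen A)
    (hQ : ∀ i, IsOpen (Q i)) (hQA : ∀ i, Q i ⊆ A) (hd : Pairwise (Disjoint on Q))
    (hcover : μ (A \ ⋃ i, Q i) = 0) (F : Finset ι) :
    Θ A ≤ ∑ i ∈ F, Θ (Q i) + Θ (⋃ i : {i // i ∉ F}, Q i) :=
  calc Θ A ≤ Θ (⋃ i ∈ F, Q i) + Θ (⋃ i : {i // i ∉ F}, Q i) :=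
        hΘ _ _ _ hA (isOpen_biUnion fun i _ => hQ i) (isOpen_iUnion fun i => hQ i)
          (iUnion₂_subset fun i _ => hQA i) (iUnion_subset fun i => hQA i)
          (disjoint_biUnion_iUnion_compl hd F).inter_eq (by rwa [biUnion_union_iUnion_compl])
    _ ≤ ∑ i ∈ F, Θ (Q i) + Θ (⋃ i : {i // i ∉ F}, Q i) := by
        gcongr
        exact hΘ.biUnion_le_sum h₀ hQ hd F

lemma le_tsum [OpensMeasurableSpace X] [IsFiniteMeasure ν] [Countable ι]
    (hΘ : OpenSubadditive μ Θ) (hν : ∀ U, IsOpen U → Θ U ≤ ν.real U) (hA : IsOpen A)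
    (hQ : ∀ i, IsOpen (Q i)) (hQA : ∀ i, Q i ⊆ A) (hd : Pairwise (Disjoint on Q))
    (hcover : μ (A \ ⋃ i, Q i) = 0) (hsum : Summable fun i => Θ (Q i)) :
    Θ A ≤ ∑' i, Θ (Q i) := by
  have h₀ : Θ ∅ ≤ 0 := by simpa using hν ∅ isOpen_empty
  have hpartial : Tendsto (fun F : Finset ι => ∑ i ∈ F, Θ (Q i)) atTop (𝓝 (∑' i, Θ (Q i))) :=
    hsum.hasSum
  have htail : Tendsto (fun F : Finset ι => ν.real (⋃ i : {i // i ∉ F}, Q i)) atTop (𝓝 0) :=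
    tendsto_measureReal_iUnion_compl_atTop_zero (fun i => (hQ i).measurableSet) hd
  have hlim : Tendsto
      (fun F : Finset ι => ∑ i ∈ F, Θ (Q i) + ν.real (⋃ i : {i // i ∉ F}, Q i))
      atTop (𝓝 (∑' i, Θ (Q i))) := by
    simpa only [add_zero] using hpartial.add htail
  refine ge_of_tendsto' hlim fun F => ?_
  calc Θ A ≤ ∑ i ∈ F, Θ (Q i) + Θ (⋃ i : {i // i ∉ F}, Q i) :=
        hΘ.le_sum_add_iUnion_compl h₀ hA hQ hQA hd hcover F
    _ ≤ ∑ i ∈ F, Θ (Q i) + ν.real (⋃ i : {i // i ∉ F}, Q i) := by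
        gcongr
        exact hν _ (isOpen_iUnion fun i => hQ i)

end OpenSubadditive

end OpenFamilies

lemma coe_tsum_ofReal_sub_coe_tsum_ofReal_neg {ι : Type*} {f : ι → ℝ} (hf : Summable f) :
    ((∑' i, ENNReal.ofReal (f i) : ℝ≥0∞) : EReal) - ((∑' i, ENNReal.ofReal (-f i) : ℝ≥0∞) : EReal)
      = ((∑' i, f i : ℝ) : EReal) := by
  have hcoe {g : ι → ℝ} (hg : Summable g) :
      ((∑' i, ENNReal.ofReal (g i) : ℝ≥0∞) : EReal) = ((∑' i, max (g i) 0 : ℝ) : EReal) := by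
    simp only [ENNReal.ofReal, ← ENNReal.coe_tsum hg.toNNReal, ← Real.coe_toNNReal',
      ← NNReal.coe_tsum, EReal.coe_nnreal_eq_coe_real]
  have hmax {g : ι → ℝ} (hg : Summable g) : Summable fun i => max (g i) 0 := by
    simpa only [Real.coe_toNNReal'] using NNReal.summable_coe.2 hg.toNNReal
  rw [hcoe hf, hcoe hf.neg, ← EReal.coe_sub, ← (hmax hf).tsum_sub (hmax hf.neg)]
  simp only [max_zero_sub_max_neg_zero_eq_self]

section VitaliEnvelope

variable [MetricSpace X]

lemma packSum_eq_tsum {Θ : Set X → ℝ} {P : Set (X × ℝ)}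
    (hP : Summable fun p : P => Θ (Metric.ball p.1.1 p.1.2)) :
    packSum Θ P = ((∑' p : P, Θ (Metric.ball p.1.1 p.1.2) : ℝ) : EReal) :=
  coe_tsum_ofReal_sub_coe_tsum_ofReal_neg hP

variable [MeasurableSpace X] {μ ν : Measure X} {Θ : Set X → ℝ} {A : Set X} {P : Set (X × ℝ)} {ε : ℝ}

lemma OpenSubadditive.le_packSum [OpensMeasurableSpace X] [IsFiniteMeasure ν]
    (hΘ : OpenSubadditive μ Θ) (hν : ∀ U, IsOpen U → |Θ U| ≤ ν.real U) (hA : IsOpen A)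
    (hP : IsVitaliPack μ ε A P) : (Θ A : EReal) ≤ packSum Θ P := by
  obtain ⟨hcount, hball, hdisj, hcover⟩ := hP
  have : Countable P := hcount.to_subtype
  have hopen (p : P) : IsOpen (Metric.ball p.1.1 p.1.2) := Metric.isOpen_ball
  have hd : Pairwise (Disjoint on fun p : P => Metric.ball p.1.1 p.1.2) :=
    (pairwise_subtype_iff_pairwise_set P _).2 hdisj
  have hsum : Summable fun p : P => Θ (Metric.ball p.1.1 p.1.2) :=
    summable_of_abs_le_measureReal (fun p => (hopen p).measurableSet) hd fun p => hν _ (hopen p)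
  rw [packSum_eq_tsum hsum, EReal.coe_le_coe_iff]
  rw [biUnion_eq_iUnion] at hcover
  exact hΘ.le_tsum (fun U hU => (le_abs_self _).trans (hν U hU)) hA hopen
    (fun p => (hball p p.2).2.2.2.1) hd hcover hsum

theorem Theta_le_lowerVitaliEnvelope_on_balls_general [OpensMeasurableSpace X] [IsFiniteMeasure ν]
    (hν : ∀ U, IsOpen U → |Θ U| ≤ ν.real U) (hΘ : OpenSubadditive μ Θ) (hA : IsOpen A) :
    (Θ A : EReal) ≤ lowerVitaliEnvelope μ Θ A := by
  refine le_iSup₂_of_le 1 one_pos (le_sInf ?_)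
  rintro _ ⟨P, hP, rfl⟩
  exact hΘ.le_packSum hν hA hP

end VitaliEnvelope

/-- If `Θ` satisfies hypotheses (a) and (b), then for every open
ball `Q` with `μ(∂Q) = 0` one has `Θ(Q) ≤ Θ*(Q)`. -/
theorem Theta_le_lowerVitaliEnvelope_on_balls
    [MetricSpace X] [MeasurableSpace X] [BorelSpace X]
    (μ : Measure X) [IsFiniteMeasure μ]
    (hpos : ∀ (x : X) (ρ : ℝ), 0 < ρ → 0 < μ (Metric.ball x ρ))
    (Θ : Set X → ℝ)
    (ha : ∃ ν : Measure X, IsFiniteMeasure ν ∧ ν ≪ μ ∧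
        ∀ A : Set X, IsOpen A → |Θ A| ≤ (ν A).toReal)
    (hb : ∀ A B C : Set X, IsOpen A → IsOpen B → IsOpen C → B ⊆ A → C ⊆ A →
        B ∩ C = ∅ → μ (A \ (B ∪ C)) = 0 → Θ A ≤ Θ B + Θ C) :
    ∀ (x : X) (ρ : ℝ), 0 < ρ → μ (ballFrontier x ρ) = 0 →
      ((Θ (Metric.ball x ρ) : ℝ) : EReal) ≤ lowerVitaliEnvelope μ Θ (Metric.ball x ρ) := by
  obtain ⟨ν, _, -, hν⟩ := ha
  exact fun _ _ _ _ => Theta_le_lowerVitaliEnvelope_on_balls_general hν hb Metric.isOpen_ball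
end

section
/- Suppose X satisfies the Vitali covering theorem with respect to μ and the set function Θ : O(X) → ℝ satisfies hypotheses (a) and (b). Then the lower and upper Vitali envelopes of Θ coincide: Θ*(A) = Θ̄*(A) for every A ∈ O(X). -/
open MeasureTheory Filter Topology Set
open scoped ENNReal

variable {X : Type*}

/-!
Passing from `Θ` to the defect `Λ = ν - Θ` replaces subadditivity and `|Θ| ≤ ν` by superadditivity
and `0 ≤ Λ ≤ 2ν`. Every pack of `A` carries the full `ν`-mass of `A`, so the `Θ`-sum of a pack is
`ν A` minus its `Λ`-sum, and it suffices to show that the `Λ`-sum of a sufficiently fine pack `P'`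
exceeds that of a given pack `P` by at most a small error. Shrink the radii of `P` by `t`. If the
radii of `P'` are less than `t / 2`, a ball of `P'` meeting a shrunken ball lies in the original
ball, and superadditivity bounds the `Λ`-sum over all such balls by the `Λ`-sum of `P`. The other
balls of `P'` avoid the shrunken balls, so their `Λ`-sum is at most the `2ν`-measure of the part
of `A` outside the shrunken balls, which tends to `0` with `t`.
-/

section AdditivityOnOpens

variable [TopologicalSpace X] [MeasurableSpace X] {μ : Measure X} {Λ : Set X → ℝ≥0∞}

/-- Subadditivity of a set function on open sets, in the sense of hypothesis (b): the two parts fill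
the open set only up to a `μ`-null set. -/
def SubadditiveOnOpens (μ : Measure X) (Θ : Set X → ℝ) : Prop :=
  ∀ A B C : Set X, IsOpen A → IsOpen B → IsOpen C → B ⊆ A → C ⊆ A →
    B ∩ C = ∅ → μ (A \ (B ∪ C)) = 0 → Θ A ≤ Θ B + Θ C

/-- Superadditivity of a set function on open sets, with the same null-set convention as
`SubadditiveOnOpens`. The values are in `ℝ≥0∞`, so that sums over arbitrary families make sense. -/
def SuperadditiveOnOpens (μ : Measure X) (Λ : Set X → ℝ≥0∞) : Prop :=
  ∀ A B C : Set X, IsOpen A → IsOpen B → IsOpen C → B ⊆ A → C ⊆ A →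
    B ∩ C = ∅ → μ (A \ (B ∪ C)) = 0 → Λ B + Λ C ≤ Λ A

namespace SuperadditiveOnOpens

lemma add_sdiff_closure_le (hΛ : SuperadditiveOnOpens μ Λ) {U B : Set X} (hU : IsOpen U)
    (hB : IsOpen B) (hBU : B ⊆ U) (hBμ : μ (frontier B) = 0) :
    Λ B + Λ (U \ closure B) ≤ Λ U := by
  refine hΛ U B _ hU hB (hU.sdiff isClosed_closure) hBU sdiff_subset
    (disjoint_sdiff_right.mono_left subset_closure).inter_eq (measure_mono_null ?_ hBμ)
  rw [hB.frontier_eq]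
  rintro z ⟨hzU, hz⟩
  simp only [mem_union, Set.mem_sdiff, not_or, not_and, not_not] at hz
  exact ⟨hz.2 hzU, hz.1⟩

lemma sum_le {ι : Type*} (hΛ : SuperadditiveOnOpens μ Λ) {B : ι → Set X}
    (hB : ∀ i, IsOpen (B i)) (hBμ : ∀ i, μ (frontier (B i)) = 0)
    (hBd : Pairwise (Function.onFun Disjoint B)) (s : Finset ι) {U : Set X} (hU : IsOpen U)
    (hBU : ∀ i ∈ s, B i ⊆ U) :
    ∑ i ∈ s, Λ (B i) ≤ Λ U := by
  classical
  induction s using Finset.induction_on generalizing U with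
  | empty => simp
  | insert j s hj ih =>
    have hsub : ∀ i ∈ s, B i ⊆ U \ closure (B j) := fun i hi =>
      subset_sdiff.2 ⟨hBU i (Finset.mem_insert_of_mem hi),
        (hBd (ne_of_mem_of_not_mem hi hj)).closure_right (hB i)⟩
    calc ∑ i ∈ insert j s, Λ (B i) = Λ (B j) + ∑ i ∈ s, Λ (B i) := Finset.sum_insert hj
      _ ≤ Λ (B j) + Λ (U \ closure (B j)) := by gcongr; exact ih (hU.sdiff isClosed_closure) hsub
      _ ≤ Λ U := hΛ.add_sdiff_closure_le hU (hB j) (hBU j (Finset.mem_insert_self j s)) (hBμ j)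

lemma tsum_le {ι : Type*} (hΛ : SuperadditiveOnOpens μ Λ) {B : ι → Set X}
    (hB : ∀ i, IsOpen (B i)) (hBμ : ∀ i, μ (frontier (B i)) = 0)
    (hBd : Pairwise (Function.onFun Disjoint B)) {U : Set X} (hU : IsOpen U)
    (hBU : ∀ i, B i ⊆ U) :
    ∑' i, Λ (B i) ≤ Λ U :=
  ENNReal.summable.tsum_le_of_sum_le fun s => hΛ.sum_le hB hBμ hBd s hU fun i _ => hBU i

lemma tsum_le_tsum_add_measure_sdiff [OpensMeasurableSpace X] {ι κ : Type*}
    (hΛ : SuperadditiveOnOpens μ Λ) {ν : Measure X} (hΛν : ∀ U, IsOpen U → Λ U ≤ ν U)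
    {B : κ → Set X} (hB : ∀ j, IsOpen (B j)) (hBμ : ∀ j, μ (frontier (B j)) = 0)
    (hBd : Pairwise (Function.onFun Disjoint B)) {A : Set X} (hBA : ∀ j, B j ⊆ A)
    {U : ι → Set X} (hU : ∀ i, IsOpen (U i)) {K : Set X}
    (hBUK : ∀ j, (∃ i, B j ⊆ U i) ∨ Disjoint (B j) K) :
    ∑' j, Λ (B j) ≤ ∑' i, Λ (U i) + ν (A \ K) := by
  have hBd_sub (S : Set κ) : Pairwise (Function.onFun Disjoint fun j : S => B j) :=
    hBd.comp_of_injective Subtype.val_injective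
  have hcover : (⋃ i, {j | B j ⊆ U i}) ∪ {j | Disjoint (B j) K} = univ :=
    eq_univ_of_forall fun j => (hBUK j).imp mem_iUnion.2 id
  have hinside : ∑' j : ⋃ i, {j | B j ⊆ U i}, Λ (B j) ≤ ∑' i, Λ (U i) :=
    (ENNReal.tsum_iUnion_le_tsum (fun j => Λ (B j)) _).trans <| ENNReal.tsum_le_tsum fun i =>
      hΛ.tsum_le (fun j : {j | B j ⊆ U i} => hB j) (fun j => hBμ j) (hBd_sub _) (hU i) fun j => j.2
  have houtside : ∑' j : {j | Disjoint (B j) K}, Λ (B j) ≤ ν (A \ K) :=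
    calc ∑' j : {j | Disjoint (B j) K}, Λ (B j)
        ≤ ∑' j : {j | Disjoint (B j) K}, ν (B j) := ENNReal.tsum_le_tsum fun j => hΛν _ (hB j)
      _ ≤ ν (⋃ j : {j | Disjoint (B j) K}, B j) :=
        tsum_meas_le_meas_iUnion_of_disjoint ν (fun j => (hB j).measurableSet) (hBd_sub _)
      _ ≤ ν (A \ K) := measure_mono <| iUnion_subset fun j => subset_sdiff.2 ⟨hBA j, j.2⟩
  calc ∑' j, Λ (B j)
      = ∑' j : ↑((⋃ i, {j | B j ⊆ U i}) ∪ {j | Disjoint (B j) K}), Λ (B j) := by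
        rw [hcover, tsum_univ fun j => Λ (B j)]
    _ ≤ _ := ENNReal.tsum_union_le (fun j => Λ (B j)) _ _
    _ ≤ ∑' i, Λ (U i) + ν (A \ K) := add_le_add hinside houtside

end SuperadditiveOnOpens

end AdditivityOnOpens

section Defect

variable [MeasurableSpace X] {μ ν : Measure X} {Θ : Set X → ℝ} {U : Set X}

/-- The defect `ν - Θ` of a set function `Θ` dominated by the measure `ν`. Hypothesis (a) makes
the truncation of negative values by `ENNReal.ofReal` void on open sets. -/
noncomputable def defect (ν : Measure X) (Θ : Set X → ℝ) (U : Set X) : ℝ≥0∞ :=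
  ENNReal.ofReal (ν.real U - Θ U)

lemma ofReal_add_defect [IsFiniteMeasure ν] (hU : |Θ U| ≤ ν.real U) :
    ENNReal.ofReal (Θ U) + defect ν Θ U = ν U + ENNReal.ofReal (-Θ U) := by
  have hΘν : Θ U ≤ ν.real U := (le_abs_self _).trans hU
  rw [defect, ← ofReal_measureReal (μ := ν) (s := U)]
  rcases le_total 0 (Θ U) with h | h
  · rw [ENNReal.ofReal_of_nonpos (neg_nonpos.2 h), ← ENNReal.ofReal_add h (sub_nonneg.2 hΘν)]
    simp
  · rw [ENNReal.ofReal_of_nonpos h, ← ENNReal.ofReal_add measureReal_nonneg (neg_nonneg.2 h),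
      zero_add, sub_eq_add_neg]

lemma defect_le_add_self [IsFiniteMeasure ν] (hU : |Θ U| ≤ ν.real U) :
    defect ν Θ U ≤ (ν + ν) U := by
  have hreal : ν.real U - Θ U ≤ ν.real U + ν.real U := by linarith [neg_abs_le (Θ U)]
  calc defect ν Θ U ≤ ENNReal.ofReal (ν.real U + ν.real U) := ENNReal.ofReal_le_ofReal hreal
    _ = (ν + ν) U := by
      rw [ENNReal.ofReal_add measureReal_nonneg measureReal_nonneg, ofReal_measureReal,
        Measure.add_apply]

lemma superadditiveOnOpens_defect [TopologicalSpace X] [OpensMeasurableSpace X]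
    [IsFiniteMeasure ν] (ha : ∀ U, IsOpen U → |Θ U| ≤ ν.real U)
    (hb : SubadditiveOnOpens μ Θ) : SuperadditiveOnOpens μ (defect ν Θ) := by
  intro A B C hA hB hC hBA hCA hBC hnull
  have hdefect_nonneg {U : Set X} (hU : IsOpen U) : 0 ≤ ν.real U - Θ U :=
    sub_nonneg.2 ((le_abs_self _).trans (ha U hU))
  have hΘ : Θ A ≤ Θ B + Θ C := hb A B C hA hB hC hBA hCA hBC hnull
  have hν : ν.real B + ν.real C ≤ ν.real A := by
    rw [← measureReal_union (disjoint_iff_inter_eq_empty.2 hBC) hC.measurableSet]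
    exact measureReal_mono (union_subset hBA hCA)
  rw [defect, defect, defect, ← ENNReal.ofReal_add (hdefect_nonneg hB) (hdefect_nonneg hC)]
  exact ENNReal.ofReal_le_ofReal (by linarith)

end Defect

section EReal

lemma coe_ennreal_sub_eq_sub_of_add_eq_add {a b c d : ℝ≥0∞} (hb : b ≠ ∞) (hd : d ≠ ∞)
    (h : a + d = c + b) :
    (a : EReal) - b = c - d := by
  lift b to NNReal using hb
  lift d to NNReal using hd
  induction a with
  | top =>
    obtain rfl : c = ∞ := by simpa using h.symm
    simp
  | coe a =>
    have hc : c ≠ ∞ := by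
      rintro rfl
      simp at h
    lift c to NNReal using hc
    norm_cast at h
    have hreal : (a : ℝ) + d = c + b := by exact_mod_cast h
    have hsub : (a : ℝ) - b = c - d := sub_eq_sub_iff_add_eq_add.2 hreal
    simp only [EReal.coe_nnreal_eq_coe_real, ← EReal.coe_sub, hsub]

lemma sub_coe_ennreal_sub_le_of_le_add {n : EReal} {a b e : ℝ≥0∞} (h : b ≤ a + e) :
    n - a - e ≤ n - b :=
  calc n - a - e = n - (a + e : ℝ≥0∞) := by
        rw [EReal.coe_ennreal_add, sub_eq_add_neg n (_ + _), EReal.neg_add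
          (.inl (EReal.coe_ennreal_ne_bot a)) (.inr (EReal.coe_ennreal_ne_bot e)),
          sub_eq_add_neg, sub_eq_add_neg, sub_eq_add_neg, add_assoc]
    _ ≤ n - b := EReal.sub_le_sub le_rfl (EReal.coe_ennreal_le_coe_ennreal_iff.2 h)

end EReal

section Balls

open Metric

lemma ball_subset_ball_of_not_disjoint [PseudoMetricSpace X] {x y : X} {r ρ t : ℝ}
    (hr : r ≤ t / 2) (h : ¬Disjoint (ball y r) (ball x (ρ - t))) : ball y r ⊆ ball x ρ := by
  obtain ⟨z, hzy, hzx⟩ := not_disjoint_iff.1 h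
  refine ball_subset_ball' ?_
  have hyx : dist y x ≤ dist z y + dist z x := dist_triangle_left y x z
  rw [mem_ball] at hzy hzx
  linarith

lemma tendsto_measure_sdiff_iUnion_ball_sub [PseudoMetricSpace X] [MeasurableSpace X]
    [OpensMeasurableSpace X] {ι : Type*} (ν : Measure X) [IsFiniteMeasure ν] {A : Set X}
    (hA : MeasurableSet A) (x : ι → X) (ρ : ι → ℝ) :
    Tendsto (fun t => ν (A \ ⋃ i, ball (x i) (ρ i - t))) (𝓝[>] 0)
      (𝓝 (ν (A \ ⋃ i, ball (x i) (ρ i)))) := by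
  have hlim : ⋂ t > (0 : ℝ), A \ ⋃ i, ball (x i) (ρ i - t) = A \ ⋃ i, ball (x i) (ρ i) := by
    ext z
    simp only [mem_iInter, Set.mem_sdiff, mem_iUnion, mem_ball, not_exists, not_lt]
    refine ⟨fun h => ⟨(h 1 one_pos).1, fun i => ?_⟩, fun h t ht => ⟨h.1, fun i => ?_⟩⟩
    · exact le_of_forall_pos_sub_le fun t ht => (h t ht).2 i
    · linarith [h.2 i]
  rw [← hlim]
  refine tendsto_measure_biInter_gt (fun t _ => ?_) (fun t t' _ htt' => ?_)
    ⟨1, one_pos, measure_ne_top ν _⟩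
  · exact (hA.diff (isOpen_iUnion fun i => isOpen_ball).measurableSet).nullMeasurableSet
  · gcongr

variable [MetricSpace X] [MeasurableSpace X] {μ : Measure X}

lemma measure_frontier_ball_eq_zero {x : X} {r : ℝ} (h : μ (ballFrontier x r) = 0) :
    μ (frontier (ball x r)) = 0 :=
  measure_mono_null (frontier_ball_subset_sphere.trans closedBall_sdiff_ball.ge) h

lemma exists_measure_ballFrontier_eq_zero [OpensMeasurableSpace X] [SFinite μ] (x : X)
    {a b : ℝ} (hab : a < b) : ∃ r ∈ Ioo a b, μ (ballFrontier x r) = 0 := by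
  have hcount : {r : ℝ | 0 < μ {y | dist y x = r}}.Countable :=
    Measure.countable_meas_level_set_pos (by fun_prop)
  obtain ⟨r, hr, hrab⟩ := (hcount.dense_compl ℝ).exists_between hab
  refine ⟨r, hrab, ?_⟩
  rw [ballFrontier, closedBall_sdiff_ball]
  exact nonpos_iff_eq_zero.1 (not_lt.1 hr)

end Balls

section VitaliPack

open Metric

variable [MetricSpace X] [MeasurableSpace X] {μ ν : Measure X} {Θ : Set X → ℝ} {ε : ℝ}
  {A : Set X} {P : Set (X × ℝ)}

lemma VitaliCoveringProperty.exists_isVitaliPack [OpensMeasurableSpace X] [SFinite μ]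
    (hμ : VitaliCoveringProperty μ) (hε : 0 < ε) (hA : IsOpen A) :
    ∃ P, IsVitaliPack μ ε A P := by
  let F : Set (X × ℝ) :=
    {p | p.1 ∈ A ∧ 0 < p.2 ∧ p.2 < ε ∧ ball p.1 p.2 ⊆ A ∧ μ (ballFrontier p.1 p.2) = 0}
  have hfine : ∀ x ∈ A, ∀ δ > 0, ∃ r : ℝ, 0 < r ∧ r < δ ∧ (x, r) ∈ F := by
    intro x hx δ hδ
    obtain ⟨b, hb, hbA⟩ := Metric.isOpen_iff.1 hA x hx
    obtain ⟨r, ⟨hr, hrlt⟩, hrμ⟩ :=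
      exists_measure_ballFrontier_eq_zero (μ := μ) x (lt_min hδ (lt_min hε hb))
    obtain ⟨hrδ, hrε, hrb⟩ : r < δ ∧ r < ε ∧ r < b := by simpa only [lt_min_iff] using hrlt
    exact ⟨r, hr, hrδ, hx, hr, hrε, (ball_subset_ball hrb.le).trans hbA, hrμ⟩
  obtain ⟨G, hGF, hGc, hGd, hGA⟩ := hμ A F (fun p hp => hp.2.1) hfine
  have hspheres : μ (⋃ p ∈ G, ballFrontier p.1 p.2) = 0 :=
    (measure_biUnion_null_iff hGc).2 fun p hp => (hGF hp).2.2.2.2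
  refine ⟨G, hGc, fun p hp => hGF hp, hGd.mono_on fun p _ => ball_subset_closedBall,
    measure_mono_null ?_ (measure_union_null hGA hspheres)⟩
  rintro z ⟨hzA, hz⟩
  by_cases hzG : z ∈ ⋃ p ∈ G, closedBall p.1 p.2
  · obtain ⟨p, hpG, hzp⟩ := mem_iUnion₂.1 hzG
    exact .inr (mem_iUnion₂.2 ⟨p, hpG, hzp, fun h => hz (mem_iUnion₂.2 ⟨p, hpG, h⟩)⟩)
  · exact .inl ⟨hzA, hzG⟩

namespace IsVitaliPack

lemma mono {ε' : ℝ} (hP : IsVitaliPack μ ε A P) (hε : ε ≤ ε') : IsVitaliPack μ ε' A P := by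
  obtain ⟨hc, hballs, hcover⟩ := hP
  refine ⟨hc, fun p hp => ?_, hcover⟩
  obtain ⟨hpA, hp0, hpε, hball⟩ := hballs p hp
  exact ⟨hpA, hp0, hpε.trans_le hε, hball⟩

lemma ball_subset (hP : IsVitaliPack μ ε A P) (p : P) : ball p.1.1 p.1.2 ⊆ A :=
  (hP.2.1 p p.2).2.2.2.1

lemma radius_lt (hP : IsVitaliPack μ ε A P) (p : P) : p.1.2 < ε :=
  (hP.2.1 p p.2).2.2.1

lemma measure_frontier_ball (hP : IsVitaliPack μ ε A P) (p : P) :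
    μ (frontier (ball p.1.1 p.1.2)) = 0 :=
  measure_frontier_ball_eq_zero (hP.2.1 p p.2).2.2.2.2

lemma pairwise_disjoint (hP : IsVitaliPack μ ε A P) :
    Pairwise (Function.onFun Disjoint fun p : P => ball p.1.1 p.1.2) :=
  hP.2.2.1.subtype _ _

lemma measure_sdiff_iUnion_ball (hP : IsVitaliPack μ ε A P) :
    μ (A \ ⋃ p : P, ball p.1.1 p.1.2) = 0 := by
  rw [← biUnion_eq_iUnion P fun p _ => ball p.1 p.2]
  exact hP.2.2.2

lemma tsum_measure_ball [OpensMeasurableSpace X] (hP : IsVitaliPack μ ε A P) (hν : ν ≪ μ) :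
    ∑' p : P, ν (ball p.1.1 p.1.2) = ν A := by
  have : Countable P := hP.1
  rw [← measure_iUnion hP.pairwise_disjoint fun p => isOpen_ball.measurableSet]
  exact (measure_mono (iUnion_subset hP.ball_subset)).antisymm
    (measure_mono_ae (ae_le_set.2 (hν hP.measure_sdiff_iUnion_ball)))

lemma tsum_le_tsum_add_measure_sdiff [OpensMeasurableSpace X] {Λ : Set X → ℝ≥0∞}
    (hΛ : SuperadditiveOnOpens μ Λ) (hΛν : ∀ U, IsOpen U → Λ U ≤ ν U) {t : ℝ}
    {Q : Set (X × ℝ)} (hP : IsVitaliPack μ (t / 2) A P) :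
    ∑' p : P, Λ (ball p.1.1 p.1.2) ≤
      ∑' q : Q, Λ (ball q.1.1 q.1.2) + ν (A \ ⋃ q : Q, ball q.1.1 (q.1.2 - t)) := by
  refine hΛ.tsum_le_tsum_add_measure_sdiff hΛν (fun p => isOpen_ball) hP.measure_frontier_ball
    hP.pairwise_disjoint hP.ball_subset (fun q => isOpen_ball) fun p => ?_
  rw [or_iff_not_imp_right, disjoint_iUnion_right, not_forall]
  rintro ⟨q, hpq⟩
  exact ⟨q, ball_subset_ball_of_not_disjoint (hP.radius_lt p).le hpq⟩

lemma tsum_defect_ne_top [OpensMeasurableSpace X] [IsFiniteMeasure ν]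
    (hP : IsVitaliPack μ ε A P) (hν : ν ≪ μ) (ha : ∀ U, IsOpen U → |Θ U| ≤ ν.real U) :
    ∑' p : P, defect ν Θ (ball p.1.1 p.1.2) ≠ ∞ := by
  refine ne_top_of_le_ne_top (measure_ne_top (ν + ν) A) ?_
  rw [← hP.tsum_measure_ball (hν.add_left hν)]
  exact ENNReal.tsum_le_tsum fun p => defect_le_add_self (ha _ isOpen_ball)

lemma packSum_eq_sub_tsum_defect [OpensMeasurableSpace X] [IsFiniteMeasure ν]
    (hP : IsVitaliPack μ ε A P) (hν : ν ≪ μ) (ha : ∀ U, IsOpen U → |Θ U| ≤ ν.real U) :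
    packSum Θ P = (ν A : EReal) - (∑' p : P, defect ν Θ (ball p.1.1 p.1.2) : ℝ≥0∞) := by
  have habs (p : P) : |Θ (ball p.1.1 p.1.2)| ≤ ν.real (ball p.1.1 p.1.2) := ha _ isOpen_ball
  have hbalance : ∑' p : P, ENNReal.ofReal (Θ (ball p.1.1 p.1.2)) +
      ∑' p : P, defect ν Θ (ball p.1.1 p.1.2) =
      ν A + ∑' p : P, ENNReal.ofReal (-Θ (ball p.1.1 p.1.2)) := by
    rw [← hP.tsum_measure_ball hν, ← ENNReal.tsum_add, ← ENNReal.tsum_add]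
    exact tsum_congr fun p => ofReal_add_defect (habs p)
  have hneg : ∑' p : P, ENNReal.ofReal (-Θ (ball p.1.1 p.1.2)) ≠ ∞ := by
    refine ne_top_of_le_ne_top (measure_ne_top ν A) ?_
    rw [← hP.tsum_measure_ball hν]
    exact ENNReal.tsum_le_tsum fun p =>
      ENNReal.ofReal_le_of_le_toReal ((neg_le_abs _).trans (habs p))
  exact coe_ennreal_sub_eq_sub_of_add_eq_add hneg (hP.tsum_defect_ne_top hν ha) hbalance

lemma packSum_sub_le_packSum [OpensMeasurableSpace X] [IsFiniteMeasure ν] (hν : ν ≪ μ)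
    (ha : ∀ U, IsOpen U → |Θ U| ≤ ν.real U) (hb : SubadditiveOnOpens μ Θ)
    {t : ℝ} {Q : Set (X × ℝ)} (hQ : IsVitaliPack μ ε A Q) (hP : IsVitaliPack μ (t / 2) A P) :
    packSum Θ Q - ((ν + ν) (A \ ⋃ q : Q, ball q.1.1 (q.1.2 - t)) : ℝ≥0∞) ≤ packSum Θ P := by
  rw [hQ.packSum_eq_sub_tsum_defect hν ha, hP.packSum_eq_sub_tsum_defect hν ha]
  exact sub_coe_ennreal_sub_le_of_le_add <| hP.tsum_le_tsum_add_measure_sdiff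
    (superadditiveOnOpens_defect ha hb) fun U hU => defect_le_add_self (ha U hU)

lemma packSum_le_lowerVitaliEnvelope [OpensMeasurableSpace X] [IsFiniteMeasure ν] (hν : ν ≪ μ)
    (ha : ∀ U, IsOpen U → |Θ U| ≤ ν.real U) (hb : SubadditiveOnOpens μ Θ)
    (hA : MeasurableSet A) (hP : IsVitaliPack μ ε A P) :
    packSum Θ P ≤ lowerVitaliEnvelope μ Θ A := by
  let e (t : ℝ) : ℝ≥0∞ := (ν + ν) (A \ ⋃ p : P, ball p.1.1 (p.1.2 - t))
  have hle (t : ℝ) (ht : 0 < t) : packSum Θ P ≤ lowerVitaliEnvelope μ Θ A + e t := by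
    rw [← EReal.sub_le_iff_le_add (.inl (EReal.coe_ennreal_ne_bot _))
      (.inl (EReal.coe_ennreal_eq_top_iff.not.2 (measure_ne_top _ _)))]
    refine le_iSup₂_of_le (t / 2) (half_pos ht) (le_sInf ?_)
    rintro _ ⟨P', hP', rfl⟩
    exact hP.packSum_sub_le_packSum hν ha hb hP'
  have he : Tendsto e (𝓝[>] 0) (𝓝 0) := by
    rw [← hν.add_left hν hP.measure_sdiff_iUnion_ball]
    exact tendsto_measure_sdiff_iUnion_ball_sub (ν + ν) hA _ _
  have hadd : ContinuousAt (fun p : EReal × EReal => p.1 + p.2)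
      (lowerVitaliEnvelope μ Θ A, ((0 : ℝ≥0∞) : EReal)) :=
    EReal.continuousAt_add (.inr (by simp)) (.inr (by simp))
  have hlim : Tendsto (fun t => lowerVitaliEnvelope μ Θ A + e t) (𝓝[>] 0)
      (𝓝 (lowerVitaliEnvelope μ Θ A)) := by
    simpa [Function.comp_def] using hadd.tendsto.comp
      (tendsto_const_nhds.prodMk_nhds ((continuous_coe_ennreal_ereal.tendsto 0).comp he))
  exact ge_of_tendsto hlim (eventually_mem_nhdsWithin.mono hle)

end IsVitaliPack

lemma lowerVitaliEnvelope_le_upperVitaliEnvelope (hP : ∀ δ > 0, ∃ P, IsVitaliPack μ δ A P) :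
    lowerVitaliEnvelope μ Θ A ≤ upperVitaliEnvelope μ Θ A := by
  refine iSup₂_le fun ε hε => le_iInf₂ fun ε' hε' => ?_
  obtain ⟨P, hP⟩ := hP (min ε ε') (lt_min hε hε')
  exact (sInf_le (mem_image_of_mem (packSum Θ) (hP.mono (min_le_left _ _)))).trans
    (le_sSup (mem_image_of_mem (packSum Θ) (hP.mono (min_le_right _ _))))

end VitaliPack

theorem lowerVitaliEnvelope_eq_upperVitaliEnvelope_general
    [MetricSpace X] [MeasurableSpace X] [OpensMeasurableSpace X]
    (μ : Measure X) [SFinite μ] (hVitali : VitaliCoveringProperty μ) (Θ : Set X → ℝ)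
    (ha : ∃ ν : Measure X, IsFiniteMeasure ν ∧ ν ≪ μ ∧
        ∀ A : Set X, IsOpen A → |Θ A| ≤ (ν A).toReal)
    (hb : ∀ A B C : Set X, IsOpen A → IsOpen B → IsOpen C → B ⊆ A → C ⊆ A →
        B ∩ C = ∅ → μ (A \ (B ∪ C)) = 0 → Θ A ≤ Θ B + Θ C)
    (A : Set X) (hA : IsOpen A) :
    lowerVitaliEnvelope μ Θ A = upperVitaliEnvelope μ Θ A := by
  obtain ⟨ν, _, hν, ha⟩ := ha
  refine (lowerVitaliEnvelope_le_upperVitaliEnvelope fun δ hδ =>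
    hVitali.exists_isVitaliPack hδ hA).antisymm ?_
  refine (iInf₂_le 1 one_pos).trans (sSup_le ?_)
  rintro _ ⟨P, hP, rfl⟩
  exact hP.packSum_le_lowerVitaliEnvelope hν ha hb hA.measurableSet

/-- If `X` satisfies the Vitali covering theorem with respect to `μ`
and `Θ` satisfies hypotheses (a) and (b), then the lower and upper Vitali envelopes
of `Θ` coincide on every open set. -/
theorem lowerVitaliEnvelope_eq_upperVitaliEnvelope
    [MetricSpace X] [MeasurableSpace X] [BorelSpace X]
    (μ : Measure X) [IsFiniteMeasure μ]
    (hpos : ∀ (x : X) (ρ : ℝ), 0 < ρ → 0 < μ (Metric.ball x ρ))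
    (hVitali : VitaliCoveringProperty μ)
    (Θ : Set X → ℝ)
    (ha : ∃ ν : Measure X, IsFiniteMeasure ν ∧ ν ≪ μ ∧
        ∀ A : Set X, IsOpen A → |Θ A| ≤ (ν A).toReal)
    (hb : ∀ A B C : Set X, IsOpen A → IsOpen B → IsOpen C → B ⊆ A → C ⊆ A →
        B ∩ C = ∅ → μ (A \ (B ∪ C)) = 0 → Θ A ≤ Θ B + Θ C) :
    ∀ A : Set X, IsOpen A → lowerVitaliEnvelope μ Θ A = upperVitaliEnvelope μ Θ A :=
  lowerVitaliEnvelope_eq_upperVitaliEnvelope_general μ hVitali Θ ha hb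
end
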